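/- (The SU(2) vectors associated to a closed homothetic Killing vector.) Let U ⊆ E be open, let (J^1,J^2,J^3) be a smooth field of quaternionic triples on U, let Γ be torsionless connection coefficients on U with (∇_X J^a)_p = 0 for all a, p, X, and let k : U → E be a smooth vector field with (∇_X k)_p = (3/2) X for all p ∈ U and X ∈ E (a closed homothetic Killing vector with w = 3). Define the vector fields k^a := (1/3) J^a k, i.e. k^a(p) = (1/3) J^a_p(k(p)). Then their Lie brackets satisfy [k^a, k^b](p) := (Dk^b)_p(k^a(p)) - (Dk^a)_p(k^b(p)) = -Σ_c ε^{abc} k^c(p) for all a,b and p ∈ U (so k^1,k^2,k^3 close into the Lie algebra su(2)), and moreover [k, k^a] = 0 for each a. -/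

import Mathlib

noncomputable section

/-- The totally antisymmetric Levi-Civita symbol on `Fin 3`, with `eps3 0 1 2 = 1`. -/
def eps3 (a b c : Fin 3) : ℝ :=
  (((b.val : ℝ) - (a.val : ℝ)) * ((c.val : ℝ) - (b.val : ℝ)) * ((c.val : ℝ) - (a.val : ℝ))) / 2

/-- A quaternionic triple of continuous linear endomorphisms:
`J^a ∘ J^b = -δ^{ab} id + Σ_c ε^{abc} J^c`. -/
def IsQuatTripleCLM {E : Type*} [NormedAddCommGroup E] [NormedSpace ℝ E]
    (J : Fin 3 → E →L[ℝ] E) : Prop :=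
  ∀ a b, (J a).comp (J b)
    = -(if a = b then (1 : E →L[ℝ] E) else 0) + ∑ c, eps3 a b c • J c

/-- The SU(2) vector fields `k^a = (1/3) J^a k`. -/
def kvec {E : Type*} [NormedAddCommGroup E] [NormedSpace ℝ E]
    (J : E → Fin 3 → E →L[ℝ] E) (k : E → E) (a : Fin 3) : E → E :=
  fun q => (3 : ℝ)⁻¹ • J q a (k q)

/-!
For a torsionless connection `[V, W] = ∇_V W - ∇_W V`. If `A`, `B` are parallel fields of
endomorphisms and `∇_X k = c X`, the Leibniz rule gives `∇_X (A k) = c A X`, hence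
`[A k, B k] = -c (A B - B A) k`. For `A`, `B` among the `J^a` the commutator on the right is
`2 Σ_c ε^{abc} J^c`, and for `A = id` it vanishes.
-/

section Connection

variable {𝕜 E : Type*} [NontriviallyNormedField 𝕜] [NormedAddCommGroup E] [NormedSpace 𝕜 E]

/-- The covariant derivative `(∇_X v)_p` of a vector field `v` for the connection coefficients `Γ`,
with `X` a vector at `p`. -/
def covDeriv (Γ : E → E →L[𝕜] E →L[𝕜] E) (v : E → E) (p X : E) : E :=
  fderiv 𝕜 v p X + Γ p X (v p)

/-- The covariant derivative `(∇_X A)_p` of a field of endomorphisms `A` for the connection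
coefficients `Γ`, with `X` a vector at `p`. -/
def covDerivEnd (Γ : E → E →L[𝕜] E →L[𝕜] E) (A : E → E →L[𝕜] E) (p X : E) : E →L[𝕜] E :=
  fderiv 𝕜 A p X + (Γ p X).comp (A p) - (A p).comp (Γ p X)

variable {Γ : E → E →L[𝕜] E →L[𝕜] E} {A B : E → E →L[𝕜] E} {v w : E → E} {p : E} {c : 𝕜}

lemma covDerivEnd_one (X : E) : covDerivEnd Γ (fun _ ↦ 1) p X = 0 := by
  ext
  simp [covDerivEnd]

lemma covDeriv_clm_apply (hA : DifferentiableAt 𝕜 A p) (hv : DifferentiableAt 𝕜 v p) (X : E) :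
    covDeriv Γ (fun q ↦ A q (v q)) p X
      = covDerivEnd Γ A p X (v p) + A p (covDeriv Γ v p X) := by
  simp only [covDeriv, covDerivEnd, fderiv_clm_apply hA hv, add_apply, sub_apply,
    ContinuousLinearMap.comp_apply, ContinuousLinearMap.flip_apply, map_add]
  abel

lemma covDeriv_clm_apply_of_parallel (hA : DifferentiableAt 𝕜 A p) (hv : DifferentiableAt 𝕜 v p)
    (hApar : ∀ X, covDerivEnd Γ A p X = 0) (hvc : ∀ X, covDeriv Γ v p X = c • X) (X : E) :
    covDeriv Γ (fun q ↦ A q (v q)) p X = c • A p X := by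
  simp [covDeriv_clm_apply hA hv, hApar, hvc]

lemma lieBracket_eq_covDeriv_sub_covDeriv (hΓ : ∀ X Y, Γ p X Y = Γ p Y X) :
    VectorField.lieBracket 𝕜 v w p = covDeriv Γ w p (v p) - covDeriv Γ v p (w p) := by
  rw [VectorField.lieBracket, covDeriv, covDeriv, hΓ (v p) (w p)]
  abel

theorem lieBracket_clm_apply_of_parallel (hΓ : ∀ X Y, Γ p X Y = Γ p Y X)
    (hA : DifferentiableAt 𝕜 A p) (hB : DifferentiableAt 𝕜 B p) (hv : DifferentiableAt 𝕜 v p)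
    (hApar : ∀ X, covDerivEnd Γ A p X = 0) (hBpar : ∀ X, covDerivEnd Γ B p X = 0)
    (hvc : ∀ X, covDeriv Γ v p X = c • X) :
    VectorField.lieBracket 𝕜 (fun q ↦ A q (v q)) (fun q ↦ B q (v q)) p
      = -(c • ⁅A p, B p⁆ (v p)) := by
  rw [lieBracket_eq_covDeriv_sub_covDeriv hΓ, covDeriv_clm_apply_of_parallel hB hv hBpar hvc,
    covDeriv_clm_apply_of_parallel hA hv hApar hvc, ← neg_sub, ← smul_sub]
  rfl

end Connection

section Quaternionic

variable {E : Type*} [NormedAddCommGroup E] [NormedSpace ℝ E]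

lemma eps3_swap (a b c : Fin 3) : eps3 b a c = -eps3 a b c := by
  unfold eps3
  ring

lemma IsQuatTripleCLM.lie_eq {J : Fin 3 → E →L[ℝ] E} (hJ : IsQuatTripleCLM J) (a b : Fin 3) :
    ⁅J a, J b⁆ = (2 : ℝ) • ∑ c, eps3 a b c • J c := by
  have hmul (a b : Fin 3) : J a * J b = -(if a = b then 1 else 0) + ∑ c, eps3 a b c • J c := hJ a b
  have hswap : ∑ c, eps3 b a c • J c = -∑ c, eps3 a b c • J c := by
    simp only [eps3_swap a b, neg_smul, Finset.sum_neg_distrib]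
  rw [Ring.lie_def, hmul, hmul, hswap, two_smul]
  simp only [eq_comm (a := b)]
  abel

/-- The vector fields `k^a = w⁻¹ J^a k` associated to a closed homothetic Killing vector `k` of
weight `w`, that is, one with `∇_X k = (w/2) X`; `kvec` is the case `w = 3`. -/
def su2Vector (w : ℝ) (J : E → Fin 3 → E →L[ℝ] E) (k : E → E) (a : Fin 3) : E → E :=
  w⁻¹ • fun q ↦ J q a (k q)

theorem stmt15_general {J : E → Fin 3 → E →L[ℝ] E} {Γ : E → E →L[ℝ] E →L[ℝ] E} {k : E → E}
    {p : E} {w : ℝ} (hw : w ≠ 0) (hJ : DifferentiableAt ℝ J p) (hk : DifferentiableAt ℝ k p)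
    (hquat : IsQuatTripleCLM (J p)) (hΓ : ∀ X Y, Γ p X Y = Γ p Y X)
    (hJpar : ∀ a X, covDerivEnd Γ (fun q ↦ J q a) p X = 0)
    (hkw : ∀ X, covDeriv Γ k p X = (w / 2) • X) :
    (∀ a b, VectorField.lieBracket ℝ (su2Vector w J k a) (su2Vector w J k b) p
      = -∑ c, eps3 a b c • su2Vector w J k c p) ∧
    ∀ a, VectorField.lieBracket ℝ k (su2Vector w J k a) p = 0 := by
  have hJa (a : Fin 3) : DifferentiableAt ℝ (fun q ↦ J q a) p := differentiableAt_pi.1 hJ a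
  have hJk (a : Fin 3) : DifferentiableAt ℝ (fun q ↦ J q a (k q)) p := (hJa a).clm_apply hk
  refine ⟨fun a b ↦ ?_, fun a ↦ ?_⟩
  · calc VectorField.lieBracket ℝ (su2Vector w J k a) (su2Vector w J k b) p
      _ = w⁻¹ • w⁻¹ • -((w / 2) • ⁅J p a, J p b⁆ (k p)) := by
        rw [su2Vector, su2Vector, VectorField.lieBracket_const_smul_left (hJk a),
          VectorField.lieBracket_const_smul_right (hJk b),
          lieBracket_clm_apply_of_parallel hΓ (hJa a) (hJa b) hk (hJpar a) (hJpar b) hkw]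
      _ = -(w⁻¹ • (∑ c, eps3 a b c • J p c) (k p)) := by
        rw [hquat.lie_eq a b, smul_apply]
        match_scalars
        field_simp
      _ = -∑ c, eps3 a b c • su2Vector w J k c p := by
        simp [su2Vector, Finset.smul_sum, smul_comm w⁻¹]
  · have hone : VectorField.lieBracket ℝ k (fun q ↦ J q a (k q)) p = 0 := by
      simpa [Ring.lie_def] using lieBracket_clm_apply_of_parallel (A := fun _ ↦ 1) hΓ
        (differentiableAt_const _) (hJa a) hk covDerivEnd_one (hJpar a) hkw
    rw [su2Vector, VectorField.lieBracket_const_smul_right (hJk a), hone, smul_zero]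

end Quaternionic

/-- for a closed homothetic Killing vector `k` (with `w = 3`) on a conformal
hypercomplex manifold, the vector fields `k^a = (1/3) J^a k` satisfy
`[k^a, k^b] = -Σ_c ε^{abc} k^c` (the algebra `su(2)`) and `[k, k^a] = 0`. -/
theorem stmt15 {E : Type*} [NormedAddCommGroup E] [NormedSpace ℝ E] [FiniteDimensional ℝ E]
    (U : Set E) (hU : IsOpen U)
    (J : E → Fin 3 → E →L[ℝ] E) (Γ : E → E →L[ℝ] E →L[ℝ] E) (k : E → E)
    (hJsm : ContDiffOn ℝ (⊤ : ℕ∞) J U) (hΓsm : ContDiffOn ℝ (⊤ : ℕ∞) Γ U)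
    (hksm : ContDiffOn ℝ (⊤ : ℕ∞) k U)
    (hquat : ∀ p ∈ U, IsQuatTripleCLM (J p))
    (htor : ∀ p ∈ U, ∀ X Y : E, Γ p X Y = Γ p Y X)
    (hJpar : ∀ p ∈ U, ∀ (a : Fin 3) (X : E),
      fderiv ℝ (fun q => J q a) p X
        + (Γ p X).comp (J p a) - (J p a).comp (Γ p X) = 0)
    (hk : ∀ p ∈ U, ∀ X : E, fderiv ℝ k p X + Γ p X (k p) = (3/2 : ℝ) • X) :
    (∀ a b : Fin 3, ∀ p ∈ U,
      fderiv ℝ (kvec J k b) p (kvec J k a p) - fderiv ℝ (kvec J k a) p (kvec J k b p)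
        = -∑ c, eps3 a b c • kvec J k c p) ∧
    (∀ a : Fin 3, ∀ p ∈ U,
      fderiv ℝ (kvec J k a) p (k p) - fderiv ℝ k p (kvec J k a p) = 0) := by
  have hbrackets (p : E) (hp : p ∈ U) := stmt15_general three_ne_zero
    ((hJsm.contDiffAt (hU.mem_nhds hp)).differentiableAt (by simp))
    ((hksm.contDiffAt (hU.mem_nhds hp)).differentiableAt (by simp))
    (hquat p hp) (htor p hp) (hJpar p hp) (hk p hp)
  exact ⟨fun a b p hp ↦ (hbrackets p hp).1 a b, fun a p hp ↦ (hbrackets p hp).2 a⟩
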